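/- Let (u,τ,S) be a twice continuously differentiable solution of the full compressible Euler equations τ_t − u_x = 0, u_t + p_x = 0, S_t = 0 (p = K e^{S/c_v} τ^{−γ}) on ℝ×[0,T) with τ > 0, where T is a finite positive constant or infinity, satisfying: u(·,0), τ(·,0) > 0, ρ(·,0) = 1/τ(·,0), S(·,0), S′(·,0), α(·,0), β(·,0) uniformly bounded, and the total variation of S(·,0) on ℝ finite. Fix 0 < ε < 1/4, and let K̂₂ be a constant with |k_{2ε}(x,t)| < K̂₂ for all (x,t) ∈ ℝ×[0,T). Let N be a constant such that α_ε(x,0) < N and β_ε(x,0) < N for all x ∈ ℝ, and N > max{ 4(γ+1)K̂₂/ε , 2K̂₂/(1 − 4ε/(γ+1)) }. Then α_ε(x,t) < N and β_ε(x,t) < N for all (x,t) ∈ ℝ×[0,T). -/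

import Mathlib

open Real Set MeasureTheory

noncomputable section

/-- Partial derivative in the spatial variable `x`. -/
def pdx (f : ℝ → ℝ → ℝ) (x t : ℝ) : ℝ := deriv (fun y => f y t) x

/-- Partial derivative in the time variable `t`. -/
def pdt (f : ℝ → ℝ → ℝ) (x t : ℝ) : ℝ := deriv (fun s => f x s) t

/-- The time strip `ℝ × [0, T)`, where `T` is a real number or `+∞`. -/
def strip (T : EReal) : Set (ℝ × ℝ) := {p : ℝ × ℝ | 0 ≤ p.2 ∧ (p.2 : EReal) < T}

/-- `η = (2√(Kγ)/(γ−1)) τ^{−(γ−1)/2}`. -/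
def etaP (K γ : ℝ) (τ : ℝ → ℝ → ℝ) (x t : ℝ) : ℝ :=
  2 * Real.sqrt (K * γ) / (γ - 1) * τ x t ^ (-(γ - 1) / 2)

/-- Gradient variable `α = s_x = u_x + η_x` for the p-system. -/
def alphaP (K γ : ℝ) (u τ : ℝ → ℝ → ℝ) (x t : ℝ) : ℝ :=
  pdx u x t + pdx (etaP K γ τ) x t

/-- Gradient variable `β = r_x = u_x − η_x` for the p-system. -/
def betaP (K γ : ℝ) (u τ : ℝ → ℝ → ℝ) (x t : ℝ) : ℝ :=
  pdx u x t - pdx (etaP K γ τ) x t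

/-- The p-system `τ_t − u_x = 0`, `u_t + p_x = 0` with `p = K τ^{−γ}`, at the point `(x,t)`. -/
def pSystem (K γ : ℝ) (u τ : ℝ → ℝ → ℝ) (x t : ℝ) : Prop :=
  pdt τ x t - pdx u x t = 0 ∧
  pdt u x t + pdx (fun y s => K * τ y s ^ (-γ)) x t = 0

/-- Riemann invariant `s = u + η`. -/
def sRi (K γ : ℝ) (u τ : ℝ → ℝ → ℝ) (x t : ℝ) : ℝ := u x t + etaP K γ τ x t

/-- Riemann invariant `r = u − η`. -/
def rRi (K γ : ℝ) (u τ : ℝ → ℝ → ℝ) (x t : ℝ) : ℝ := u x t - etaP K γ τ x t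

/-- The Lagrangian wave speed `c = √(Kγ) τ^{−(γ+1)/2}`. -/
def cP (K γ : ℝ) (τ : ℝ → ℝ → ℝ) (x t : ℝ) : ℝ :=
  Real.sqrt (K * γ) * τ x t ^ (-(γ + 1) / 2)

/-- The constant `K_τ = (2√(Kγ)/(γ−1))^{2/(γ−1)}`. -/
def KtauC (K γ : ℝ) : ℝ := (2 * Real.sqrt (K * γ) / (γ - 1)) ^ (2 / (γ - 1))

/-- The constant `K_c = √(Kγ) K_τ^{−(γ+1)/2}`. -/
def KcC (K γ : ℝ) : ℝ := Real.sqrt (K * γ) * KtauC K γ ^ (-(γ + 1) / 2)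

/-- `k₁ = ((γ+1)K_c/(2(γ−1))) η^{2/(γ−1)}`. -/
def k1P (K γ : ℝ) (τ : ℝ → ℝ → ℝ) (x t : ℝ) : ℝ :=
  (γ + 1) * KcC K γ / (2 * (γ - 1)) * etaP K γ τ x t ^ (2 / (γ - 1))
/-- `m = e^{S/(2c_v)}`. -/
def mF (cv : ℝ) (S : ℝ → ℝ → ℝ) (x t : ℝ) : ℝ := Real.exp (S x t / (2 * cv))

/-- The ideal polytropic pressure `p = K e^{S/c_v} τ^{−γ}`. -/
def pF (K cv γ : ℝ) (τ S : ℝ → ℝ → ℝ) (x t : ℝ) : ℝ :=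
  K * Real.exp (S x t / cv) * τ x t ^ (-γ)

/-- The full compressible Euler equations `τ_t − u_x = 0`, `u_t + p_x = 0`, `S_t = 0`
with `p = K e^{S/c_v} τ^{−γ}`, at the point `(x,t)`. -/
def fullEuler (K cv γ : ℝ) (u τ S : ℝ → ℝ → ℝ) (x t : ℝ) : Prop :=
  pdt τ x t - pdx u x t = 0 ∧
  pdt u x t + pdx (pF K cv γ τ S) x t = 0 ∧
  pdt S x t = 0

/-- Wave speed `c = K_c m η^{(γ+1)/(γ−1)}` for the full Euler equations. -/
def cF (K cv γ : ℝ) (τ S : ℝ → ℝ → ℝ) (x t : ℝ) : ℝ :=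
  KcC K γ * mF cv S x t * etaP K γ τ x t ^ ((γ + 1) / (γ - 1))

/-- Gradient variable `α = u_x + m η_x + ((γ−1)/γ) m_x η` for the full Euler equations. -/
def alphaF (K cv γ : ℝ) (u τ S : ℝ → ℝ → ℝ) (x t : ℝ) : ℝ :=
  pdx u x t + mF cv S x t * pdx (etaP K γ τ) x t
    + (γ - 1) / γ * pdx (mF cv S) x t * etaP K γ τ x t

/-- Gradient variable `β = u_x − m η_x − ((γ−1)/γ) m_x η` for the full Euler equations. -/
def betaF (K cv γ : ℝ) (u τ S : ℝ → ℝ → ℝ) (x t : ℝ) : ℝ :=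
  pdx u x t - mF cv S x t * pdx (etaP K γ τ) x t
    - (γ - 1) / γ * pdx (mF cv S) x t * etaP K γ τ x t

/-- `k₂ = ((γ−1)/(γ(γ+1))) η m_x`. -/
def k2F (K cv γ : ℝ) (τ S : ℝ → ℝ → ℝ) (x t : ℝ) : ℝ :=
  (γ - 1) / (γ * (γ + 1)) * etaP K γ τ x t * pdx (mF cv S) x t

/-- Weighted gradient variable `α_ε = η^{2ε/(γ−1)} α`. -/
def aeps (K cv γ ε : ℝ) (u τ S : ℝ → ℝ → ℝ) (x t : ℝ) : ℝ :=
  etaP K γ τ x t ^ (2 * ε / (γ - 1)) * alphaF K cv γ u τ S x t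

/-- Weighted gradient variable `β_ε = η^{2ε/(γ−1)} β`. -/
def beps (K cv γ ε : ℝ) (u τ S : ℝ → ℝ → ℝ) (x t : ℝ) : ℝ :=
  etaP K γ τ x t ^ (2 * ε / (γ - 1)) * betaF K cv γ u τ S x t

/-- `k_{1ε} = ((γ+1)K_c/(2(γ−1))) η^{(2/(γ−1))(1−ε)}`. -/
def k1e (K γ ε : ℝ) (τ : ℝ → ℝ → ℝ) (x t : ℝ) : ℝ :=
  (γ + 1) * KcC K γ / (2 * (γ - 1)) * etaP K γ τ x t ^ (2 / (γ - 1) * (1 - ε))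

/-- `k_{2ε} = ((γ−1)/(γ(γ+1))) η^{1+2ε/(γ−1)} m_x`. -/
def k2e (K cv γ ε : ℝ) (τ S : ℝ → ℝ → ℝ) (x t : ℝ) : ℝ :=
  (γ - 1) / (γ * (γ + 1)) * etaP K γ τ x t ^ (1 + 2 * ε / (γ - 1)) * pdx (mF cv S) x t

open Topology

/-- A finite family of functions on a compact set of space-time stays negative, provided that at
every point either all of them are negative or one can move backwards in time inside the set, and
that at a first zero of one of them some backward direction strictly increases it. -/
theorem neg_of_backward_increasing {ι : Type*} [Finite ι] {Q : Set (ℝ × ℝ)} (hQ : IsCompact Q)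
    {F : ι → ℝ × ℝ → ℝ} (hF : ∀ i, ContinuousOn (F i) Q)
    (hback : ∀ p ∈ Q, (∀ i, F i p < 0) ∨
      ((∃ v : ℝ, ∀ᶠ h in 𝓝[>] (0 : ℝ), (p.1 + h * v, p.2 + h * (-1)) ∈ Q) ∧
        ((∀ j, F j p ≤ 0) → ∀ i, F i p = 0 → ∃ v d : ℝ, 0 < d ∧
          (∀ᶠ h in 𝓝[>] (0 : ℝ), (p.1 + h * v, p.2 + h * (-1)) ∈ Q) ∧
          HasDerivAt (fun h : ℝ => F i (p.1 + h * v, p.2 + h * (-1))) d 0))) :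
    ∀ p ∈ Q, ∀ i, F i p < 0 := by
  by_contra hcon
  push Not at hcon
  obtain ⟨p₀, hp₀, i₀, hi₀⟩ := hcon
  have hZ : IsCompact (⋃ i, Q ∩ F i ⁻¹' Ici 0) := by
    refine isCompact_iUnion fun i => ?_
    exact hQ.of_isClosed_subset ((hF i).preimage_isClosed_of_isClosed hQ.isClosed isClosed_Ici)
      inter_subset_left
  obtain ⟨p, hpZ, hpmin⟩ := hZ.exists_isMinOn
    ⟨p₀, mem_iUnion.2 ⟨i₀, hp₀, hi₀⟩⟩ continuous_snd.continuousOn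
  obtain ⟨i₁, hpQ, hi₁⟩ := mem_iUnion.1 hpZ
  have hearlier : ∀ q ∈ Q, q.2 < p.2 → ∀ i, F i q < 0 := by
    intro q hq hlt i
    by_contra hge
    exact absurd (hpmin (mem_iUnion.2 ⟨i, hq, not_lt.1 hge⟩)) (not_le.2 hlt)
  rcases hback p hpQ with hneg | ⟨⟨v, hv⟩, hinc⟩
  · exact absurd (hneg i₁) (not_lt.2 hi₁)
  have hle : ∀ j, F j p ≤ 0 := by
    intro j
    have hlim : Filter.Tendsto (fun h : ℝ => (p.1 + h * v, p.2 + h * (-1))) (𝓝[>] 0) (𝓝[Q] p) := by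
      refine tendsto_nhdsWithin_iff.2 ⟨?_, hv⟩
      have : Continuous fun h : ℝ => (p.1 + h * v, p.2 + h * (-1)) := by fun_prop
      have h0 := this.tendsto 0
      simp only [zero_mul, add_zero, Prod.mk.eta] at h0
      exact h0.mono_left nhdsWithin_le_nhds
    refine le_of_tendsto ((hF j p hpQ).tendsto.comp hlim) ?_
    filter_upwards [hv, self_mem_nhdsWithin] with h hmem hpos
    have hpos' : 0 < h := hpos
    exact (hearlier _ hmem (by simp only; linarith) j).le
  have hzero : F i₁ p = 0 := le_antisymm (hle i₁) hi₁
  obtain ⟨w, d, hd, hw, hder⟩ := hinc hle i₁ hzero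
  have hslope := hasDerivWithinAt_iff_tendsto_slope.1 (hder.hasDerivWithinAt (s := Ioi 0))
  have hset : Ioi (0 : ℝ) \ {0} = Ioi 0 := by
    ext h
    simp only [mem_sdiff, mem_Ioi, mem_singleton_iff, and_iff_left_iff_imp]
    exact fun hh => hh.ne'
  rw [hset] at hslope
  have hposslope := hslope.eventually (lt_mem_nhds hd)
  obtain ⟨h, hs, hmem, hpos⟩ := (hposslope.and (hw.and self_mem_nhdsWithin)).exists
  have hpos' : 0 < h := hpos
  rw [slope_def_field] at hs
  simp only [zero_mul, add_zero, Prod.mk.eta, hzero, sub_zero] at hs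
  have := hearlier _ hmem (by simp only; linarith) i₁
  exact absurd hs (not_lt.2 (div_nonpos_of_nonpos_of_nonneg this.le hpos'.le))

/-- The backward triangle with apex `(x₀, t₀)` and slope `L`, cut off to `a ≤ x ≤ b`. -/
def backwardTriangle (a b L x₀ t₀ : ℝ) : Set (ℝ × ℝ) :=
  {p | a ≤ p.1 ∧ p.1 ≤ b ∧ 0 ≤ p.2 ∧ p.2 ≤ t₀ ∧ |p.1 - x₀| ≤ L * (t₀ - p.2)}

theorem isCompact_backwardTriangle (a b L x₀ t₀ : ℝ) :
    IsCompact (backwardTriangle a b L x₀ t₀) := by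
  refine (isCompact_Icc.prod isCompact_Icc : IsCompact (Icc a b ×ˢ Icc 0 t₀)).of_isClosed_subset
    ?_ (fun p hp => ⟨⟨hp.1, hp.2.1⟩, ⟨hp.2.2.1, hp.2.2.2.1⟩⟩)
  simp only [backwardTriangle, ofPred_and]
  refine IsClosed.inter ?_ (IsClosed.inter ?_ (IsClosed.inter ?_ (IsClosed.inter ?_ ?_)))
  all_goals exact isClosed_le (by fun_prop) (by fun_prop)

theorem eventually_mem_backwardTriangle {a b L x₀ t₀ : ℝ} {p : ℝ × ℝ}
    (hp : p ∈ backwardTriangle a b L x₀ t₀) (ha : a < p.1) (hb : p.1 < b) (ht : 0 < p.2)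
    {v : ℝ} (hv : |v| ≤ L) :
    ∀ᶠ h in 𝓝[>] (0 : ℝ), (p.1 + h * v, p.2 + h * (-1)) ∈ backwardTriangle a b L x₀ t₀ := by
  have c₁ : ContinuousAt (fun h : ℝ => p.1 + h * v) 0 := by fun_prop
  have c₂ : ContinuousAt (fun h : ℝ => p.2 + h * (-1)) 0 := by fun_prop
  have e₁ := c₁.eventually (lt_mem_nhds (by simpa using ha : a < p.1 + 0 * v))
  have e₂ := c₁.eventually (gt_mem_nhds (by simpa using hb : p.1 + 0 * v < b))
  have e₃ := c₂.eventually (lt_mem_nhds (by simpa using ht : 0 < p.2 + 0 * (-1)))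
  filter_upwards [nhdsWithin_le_nhds e₁, nhdsWithin_le_nhds e₂, nhdsWithin_le_nhds e₃,
    self_mem_nhdsWithin] with h h₁ h₂ h₃ hpos
  have hpos' : 0 < h := hpos
  refine ⟨h₁.le, h₂.le, h₃.le, by simp only; linarith [hp.2.2.2.1], ?_⟩
  have htri : |p.1 - x₀| ≤ L * (t₀ - p.2) := hp.2.2.2.2
  simp only
  calc |p.1 + h * v - x₀| = |(p.1 - x₀) + h * v| := by ring_nf
    _ ≤ |p.1 - x₀| + |h * v| := abs_add_le _ _
    _ = |p.1 - x₀| + h * |v| := by rw [abs_mul, abs_of_pos hpos']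
    _ ≤ L * (t₀ - p.2) + h * L := by gcongr
    _ = L * (t₀ - (p.2 + h * (-1))) := by ring

/-- The total variation of a differentiable function bounds the integral of its derivative. -/
theorem integral_abs_deriv_le_eVariationOn {f f' : ℝ → ℝ} (hf : ∀ x, HasDerivAt f (f' x) x)
    (hf' : Continuous f') {a b : ℝ} (hab : a ≤ b) {s : Set ℝ} (hs : Icc a b ⊆ s)
    (hBV : BoundedVariationOn f univ) :
    ∫ x in a..b, |f' x| ≤ (eVariationOn f s).toReal := by
  have hloc := hBV.locallyBoundedVariationOn
  set V : ℝ → ℝ := variationOnFromTo f univ a with hV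
  have hmono : MonotoneOn V univ := variationOnFromTo.monotoneOn hloc (mem_univ a)
  have hincr : ∀ x y, x ≤ y → |f y - f x| ≤ V y - V x := by
    intro x y hxy
    have hadd := variationOnFromTo.add hloc (mem_univ a) (mem_univ x) (mem_univ y)
    have hxyV : |f y - f x| ≤ variationOnFromTo f univ x y := by
      rw [variationOnFromTo.eq_of_le f univ hxy, ← Real.dist_eq]
      exact (hBV.mono (subset_univ (univ ∩ Icc x y))).dist_le ⟨mem_univ y, hxy, le_rfl⟩
        ⟨mem_univ x, le_rfl, hxy⟩
    simp only [hV]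
    linarith
  have hint := hmono.mono (subset_univ (uIcc a b))
  have hmem := hint.intervalIntegral_deriv_mem_uIcc
  have hVab : 0 ≤ V b - V a := (abs_nonneg _).trans (hincr a b hab)
  rw [uIcc_of_le hVab] at hmem
  have hVa : V a = 0 := variationOnFromTo.self f univ a
  have hVb : V b ≤ (eVariationOn f s).toReal := by
    simp only [hV]
    rw [variationOnFromTo.eq_of_le f univ hab]
    refine ENNReal.toReal_mono (hBV.mono (subset_univ s)) (eVariationOn.mono f ?_)
    rw [univ_inter]
    exact hs
  have hae : ∀ᵐ x, DifferentiableAt ℝ V x :=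
    (Monotone.ae_differentiableAt (fun x y h => hmono (mem_univ x) (mem_univ y) h))
  have hle : ∫ x in a..b, |f' x| ≤ ∫ x in a..b, deriv V x := by
    refine intervalIntegral.integral_mono_ae hab (hf'.abs.intervalIntegrable a b)
      hint.intervalIntegrable_deriv ?_
    filter_upwards [hae] with x hx
    have hsV := hasDerivWithinAt_iff_tendsto_slope.1 (hx.hasDerivAt.hasDerivWithinAt (s := Ioi x))
    have hsf := (hasDerivWithinAt_iff_tendsto_slope.1 ((hf x).hasDerivWithinAt (s := Ioi x))).abs
    have hset : Ioi x \ {x} = Ioi x := by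
      ext h
      simp only [mem_sdiff, mem_Ioi, mem_singleton_iff, and_iff_left_iff_imp]
      exact fun hh => hh.ne'
    rw [hset] at hsV hsf
    refine le_of_tendsto_of_tendsto hsf hsV ?_
    filter_upwards [self_mem_nhdsWithin] with y hy
    have hy' : x < y := hy
    rw [slope_def_field, slope_def_field, abs_div, abs_of_pos (sub_pos.2 hy')]
    exact div_le_div_of_nonneg_right (hincr x y hy'.le) (sub_pos.2 hy').le
  linarith [hmem.2]

theorem convex_strip (T : EReal) : Convex ℝ (strip T) := by
  intro p hp q hq a b ha hb hab
  refine ⟨?_, ?_⟩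
  · simp only [Prod.snd_add, Prod.smul_snd, smul_eq_mul]
    exact add_nonneg (mul_nonneg ha hp.1) (mul_nonneg hb hq.1)
  · refine lt_of_le_of_lt ?_ (max_lt hp.2 hq.2)
    rw [← EReal.coe_strictMono.monotone.map_max]
    refine EReal.coe_le_coe_iff.2 ?_
    simp only [Prod.snd_add, Prod.smul_snd, smul_eq_mul]
    calc a * p.2 + b * q.2 ≤ a * max p.2 q.2 + b * max p.2 q.2 := by
          gcongr
          · exact le_max_left _ _
          · exact le_max_right _ _
      _ = max p.2 q.2 := by rw [← add_mul, hab, one_mul]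

theorem strip_mem_nhds {T : EReal} {x t : ℝ} (ht : 0 < t) (htT : (t : EReal) < T) :
    strip T ∈ 𝓝 (x, t) := by
  have hopen : IsOpen {p : ℝ × ℝ | 0 < p.2 ∧ (p.2 : EReal) < T} :=
    (isOpen_lt continuous_const continuous_snd).inter
      (isOpen_lt (continuous_coe_real_ereal.comp continuous_snd) continuous_const)
  exact Filter.mem_of_superset (hopen.mem_nhds ⟨ht, htT⟩) fun p hp => ⟨hp.1.le, hp.2⟩

theorem uniqueDiffOn_strip {T : EReal} (hT : 0 < T) : UniqueDiffOn ℝ (strip T) := by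
  refine uniqueDiffOn_convex (convex_strip T) ?_
  obtain ⟨t, h0, ht⟩ := EReal.lt_iff_exists_real_btwn.1 hT
  exact ⟨(0, t), mem_interior_iff_mem_nhds.2 (strip_mem_nhds (EReal.coe_pos.1 h0) ht)⟩

/-- The spatial slices of a function that is differentiable on the strip, down to `t = 0`. -/
theorem hasDerivAt_pdx_of_strip {T : EReal} {f : ℝ → ℝ → ℝ}
    (hf : DifferentiableOn ℝ (fun p : ℝ × ℝ => f p.1 p.2) (strip T)) {x t : ℝ} (ht : 0 ≤ t)
    (htT : (t : EReal) < T) :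
    HasDerivAt (fun y => f y t)
      (fderivWithin ℝ (fun p : ℝ × ℝ => f p.1 p.2) (strip T) (x, t) (1, 0)) x := by
  have h₁ := (hf (x, t) ⟨ht, htT⟩).hasFDerivWithinAt
  have h₂ : HasDerivWithinAt (fun y : ℝ => (y, t)) ((1 : ℝ), (0 : ℝ)) univ x :=
    ((hasDerivAt_id x).prodMk (hasDerivAt_const x t)).hasDerivWithinAt
  exact (h₁.comp_hasDerivWithinAt x h₂ (fun y _ => (⟨ht, htT⟩ : (y, t) ∈ strip T))).hasDerivAt
    Filter.univ_mem

theorem continuousOn_pdx_strip {T : EReal} (hT : 0 < T) {f : ℝ → ℝ → ℝ}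
    (hf : ContDiffOn ℝ 2 (fun p : ℝ × ℝ => f p.1 p.2) (strip T)) :
    ContinuousOn (fun p : ℝ × ℝ => pdx f p.1 p.2) (strip T) := by
  have hc := hf.continuousOn_fderivWithin (uniqueDiffOn_strip hT) (by norm_num)
  refine (hc.clm_apply (continuousOn_const (c := ((1 : ℝ), (0 : ℝ))))).congr fun p hp => ?_
  exact (hasDerivAt_pdx_of_strip (hf.differentiableOn (by norm_num)) hp.1 hp.2).deriv

/-- Derivatives along lines through a point where a function is twice continuously
differentiable, for the function and for its spatial derivative, and equality of the mixed second
derivatives. -/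
theorem exists_second_derivs {f : ℝ → ℝ → ℝ} {x t : ℝ}
    (hf : ContDiffAt ℝ 2 (fun p : ℝ × ℝ => f p.1 p.2) (x, t)) :
    (∀ v w : ℝ, HasDerivAt (fun h : ℝ => f (x + h * v) (t + h * w))
      (v * pdx f x t + w * pdt f x t) 0) ∧
    ∃ fxx fxt : ℝ, (∀ v w : ℝ, HasDerivAt (fun h : ℝ => pdx f (x + h * v) (t + h * w))
      (v * fxx + w * fxt) 0) ∧ HasDerivAt (fun h : ℝ => pdt f (x + h * 1) (t + h * 0)) fxt 0 := by
  set g : ℝ × ℝ → ℝ := fun p => f p.1 p.2 with hg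
  have hline : ∀ v w : ℝ, HasDerivAt (fun h : ℝ => (x + h * v, t + h * w)) (v, w) 0 := by
    intro v w
    have h₁ : HasDerivAt (fun h : ℝ => x + h * v) v 0 := by
      simpa using ((hasDerivAt_id (0 : ℝ)).mul_const v).const_add x
    have h₂ : HasDerivAt (fun h : ℝ => t + h * w) w 0 := by
      simpa using ((hasDerivAt_id (0 : ℝ)).mul_const w).const_add t
    exact h₁.prodMk h₂
  have hpdx : ∀ p : ℝ × ℝ, DifferentiableAt ℝ g p → pdx f p.1 p.2 = fderiv ℝ g p (1, 0) := by
    intro p hp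
    have h₂ : HasDerivAt (fun y : ℝ => (y, p.2)) ((1 : ℝ), (0 : ℝ)) p.1 :=
      (hasDerivAt_id p.1).prodMk (hasDerivAt_const p.1 p.2)
    exact (HasFDerivAt.comp_hasDerivAt (l := g) p.1 hp.hasFDerivAt h₂).deriv
  have hpdt : ∀ p : ℝ × ℝ, DifferentiableAt ℝ g p → pdt f p.1 p.2 = fderiv ℝ g p (0, 1) := by
    intro p hp
    have h₂ : HasDerivAt (fun s : ℝ => (p.1, s)) ((0 : ℝ), (1 : ℝ)) p.2 :=
      (hasDerivAt_const p.2 p.1).prodMk (hasDerivAt_id p.2)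
    exact (HasFDerivAt.comp_hasDerivAt (l := g) p.2 hp.hasFDerivAt h₂).deriv
  have hsplit : ∀ v w : ℝ, ((v, w) : ℝ × ℝ) = v • ((1 : ℝ), (0 : ℝ)) + w • ((0 : ℝ), (1 : ℝ)) := by
    intro v w
    simp
  have hdiff : DifferentiableAt ℝ g (x, t) := hf.differentiableAt (by norm_num)
  have hev : ∀ᶠ p in 𝓝 (x, t), DifferentiableAt ℝ g p := by
    filter_upwards [hf.eventually (by simp)] with p hp using hp.differentiableAt (by norm_num)
  have hd2 : DifferentiableAt ℝ (fderiv ℝ g) (x, t) :=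
    (hf.fderiv_right (m := 1) (by norm_num)).differentiableAt (by norm_num)
  have hsymm : IsSymmSndFDerivAt ℝ g (x, t) := hf.isSymmSndFDerivAt (by simp)
  have hevline : ∀ v w : ℝ, ∀ᶠ h in 𝓝 (0 : ℝ), DifferentiableAt ℝ g (x + h * v, t + h * w) := by
    intro v w
    have := (hline v w).continuousAt.tendsto
    simp only [zero_mul, add_zero] at this
    exact this.eventually hev
  have hat : ∀ v w : ℝ, (x + 0 * v, t + 0 * w) = (x, t) := by simp
  have hsnd : ∀ v w : ℝ, ∀ e : ℝ × ℝ, HasDerivAt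
      (fun h : ℝ => fderiv ℝ g (x + h * v, t + h * w) e) (fderiv ℝ (fderiv ℝ g) (x, t) (v, w) e) 0 := by
    intro v w e
    have h₁ : HasFDerivAt (fderiv ℝ g) (fderiv ℝ (fderiv ℝ g) (x, t)) (x + 0 * v, t + 0 * w) := by
      rw [hat]
      exact hd2.hasFDerivAt
    have h₂ := h₁.comp_hasDerivAt (0 : ℝ) (hline v w)
    exact (ContinuousLinearMap.apply ℝ ℝ e).hasFDerivAt.comp_hasDerivAt (0 : ℝ) h₂
  refine ⟨fun v w => ?_, fderiv ℝ (fderiv ℝ g) (x, t) (1, 0) (1, 0),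
    fderiv ℝ (fderiv ℝ g) (x, t) (0, 1) (1, 0), fun v w => ?_, ?_⟩
  · have h₁ : HasFDerivAt g (fderiv ℝ g (x, t)) (x + 0 * v, t + 0 * w) := by
      rw [hat]
      exact hdiff.hasFDerivAt
    have h₂ := h₁.comp_hasDerivAt (0 : ℝ) (hline v w)
    rw [hsplit v w, map_add, map_smul, map_smul, ← hpdx _ hdiff, ← hpdt _ hdiff] at h₂
    exact h₂
  · have h₁ := hsnd v w (1, 0)
    rw [hsplit v w, map_add, map_smul, map_smul] at h₁
    refine HasDerivAt.congr_of_eventuallyEq h₁ ?_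
    filter_upwards [hevline v w] with h hh
    exact hpdx _ hh
  · have h₁ := hsnd 1 0 (0, 1)
    rw [hsymm.eq] at h₁
    refine HasDerivAt.congr_of_eventuallyEq h₁ ?_
    filter_upwards [hevline 1 0] with h hh
    exact hpdt _ hh

/-- The quantity `p_x / c = m η_x + ((γ−1)/γ) m_x η`, written with `τ_x` and `S_x`. -/
def gradQ (K cv γ : ℝ) (τ S : ℝ → ℝ → ℝ) (x t : ℝ) : ℝ :=
  (γ - 1) / γ * (mF cv S x t * (pdx S x t / (2 * cv))) * etaP K γ τ x t
    - mF cv S x t * cP K γ τ x t * pdx τ x t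

theorem cP_pos {K γ : ℝ} (hK : 0 < K) (hγ : 1 < γ) {τ : ℝ → ℝ → ℝ} {x t : ℝ}
    (hτ : 0 < τ x t) : 0 < cP K γ τ x t :=
  mul_pos (Real.sqrt_pos.2 (mul_pos hK (by linarith))) (Real.rpow_pos_of_pos hτ _)

theorem etaP_pos {K γ : ℝ} (hK : 0 < K) (hγ : 1 < γ) {τ : ℝ → ℝ → ℝ} {x t : ℝ}
    (hτ : 0 < τ x t) : 0 < etaP K γ τ x t := by
  have h₁ : 0 < Real.sqrt (K * γ) := Real.sqrt_pos.2 (mul_pos hK (by linarith))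
  have h₂ : 0 < γ - 1 := by linarith
  have h₃ := Real.rpow_pos_of_pos hτ (-(γ - 1) / 2)
  unfold etaP
  positivity

theorem mF_pos (cv : ℝ) (S : ℝ → ℝ → ℝ) (x t : ℝ) : 0 < mF cv S x t := Real.exp_pos _

theorem etaP_eq_cP {K γ : ℝ} {τ : ℝ → ℝ → ℝ} {x t : ℝ} (hτ : 0 < τ x t) :
    etaP K γ τ x t = 2 * cP K γ τ x t * τ x t / (γ - 1) := by
  have h : τ x t ^ (-(γ - 1) / 2) = τ x t ^ (-(γ + 1) / 2) * τ x t := by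
    rw [← Real.rpow_add_one hτ.ne']
    ring_nf
  unfold etaP cP
  rw [h]
  ring

theorem hasDerivAt_etaP_comp {K γ : ℝ} (hγ : 1 < γ) {τ : ℝ → ℝ → ℝ} {X Y : ℝ → ℝ} {h₀ τ' : ℝ}
    (hτ : 0 < τ (X h₀) (Y h₀)) (hd : HasDerivAt (fun h => τ (X h) (Y h)) τ' h₀) :
    HasDerivAt (fun h => etaP K γ τ (X h) (Y h)) (-(cP K γ τ (X h₀) (Y h₀) * τ')) h₀ := by
  have h₁ := (hd.rpow_const (p := -(γ - 1) / 2) (Or.inl hτ.ne')).const_mul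
    (2 * Real.sqrt (K * γ) / (γ - 1))
  refine h₁.congr_deriv ?_
  have h₂ : γ - 1 ≠ 0 := by linarith
  have h₃ : -(γ - 1) / 2 - 1 = -(γ + 1) / 2 := by ring
  rw [h₃]
  unfold cP
  field_simp

theorem hasDerivAt_cP_comp {K γ : ℝ} {τ : ℝ → ℝ → ℝ} {X Y : ℝ → ℝ} {h₀ τ' : ℝ}
    (hτ : 0 < τ (X h₀) (Y h₀)) (hd : HasDerivAt (fun h => τ (X h) (Y h)) τ' h₀) :
    HasDerivAt (fun h => cP K γ τ (X h) (Y h))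
      (-((γ + 1) / 2 * cP K γ τ (X h₀) (Y h₀) / τ (X h₀) (Y h₀) * τ')) h₀ := by
  have h₁ := (hd.rpow_const (p := -(γ + 1) / 2) (Or.inl hτ.ne')).const_mul (Real.sqrt (K * γ))
  refine h₁.congr_deriv ?_
  rw [Real.rpow_sub_one hτ.ne']
  unfold cP
  ring

theorem hasDerivAt_mF_comp {cv : ℝ} {S : ℝ → ℝ → ℝ} {X Y : ℝ → ℝ} {h₀ S' : ℝ}
    (hd : HasDerivAt (fun h => S (X h) (Y h)) S' h₀) :
    HasDerivAt (fun h => mF cv S (X h) (Y h)) (mF cv S (X h₀) (Y h₀) * (S' / (2 * cv))) h₀ :=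
  (hd.div_const (2 * cv)).exp

theorem hasDerivAt_gradQ_comp {K cv γ : ℝ} (hγ : 1 < γ) {τ S : ℝ → ℝ → ℝ} {X Y : ℝ → ℝ}
    {h₀ τ' S' τ₁' S₁' : ℝ} (hτ : 0 < τ (X h₀) (Y h₀))
    (hτd : HasDerivAt (fun h => τ (X h) (Y h)) τ' h₀)
    (hSd : HasDerivAt (fun h => S (X h) (Y h)) S' h₀)
    (hτxd : HasDerivAt (fun h => pdx τ (X h) (Y h)) τ₁' h₀)
    (hSxd : HasDerivAt (fun h => pdx S (X h) (Y h)) S₁' h₀) :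
    HasDerivAt (fun h => gradQ K cv γ τ S (X h) (Y h))
      ((γ - 1) / γ * (mF cv S (X h₀) (Y h₀) * (S' / (2 * cv)) * (pdx S (X h₀) (Y h₀) / (2 * cv))
          + mF cv S (X h₀) (Y h₀) * (S₁' / (2 * cv))) * etaP K γ τ (X h₀) (Y h₀)
        + (γ - 1) / γ * (mF cv S (X h₀) (Y h₀) * (pdx S (X h₀) (Y h₀) / (2 * cv)))
          * (-(cP K γ τ (X h₀) (Y h₀) * τ'))
        - ((mF cv S (X h₀) (Y h₀) * (S' / (2 * cv)) * cP K γ τ (X h₀) (Y h₀)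
            + mF cv S (X h₀) (Y h₀)
              * (-((γ + 1) / 2 * cP K γ τ (X h₀) (Y h₀) / τ (X h₀) (Y h₀) * τ')))
              * pdx τ (X h₀) (Y h₀)
          + mF cv S (X h₀) (Y h₀) * cP K γ τ (X h₀) (Y h₀) * τ₁')) h₀ := by
  have hm := hasDerivAt_mF_comp (cv := cv) hSd
  have hη := hasDerivAt_etaP_comp (K := K) hγ hτ hτd
  have hg := hasDerivAt_cP_comp (K := K) (γ := γ) hτ hτd
  exact (((hm.mul (hSxd.div_const (2 * cv))).const_mul ((γ - 1) / γ)).mul hη).sub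
    ((hm.mul hg).mul hτxd)

theorem alphaF_eq {K cv γ : ℝ} (hγ : 1 < γ) {u τ S : ℝ → ℝ → ℝ} {x t : ℝ} (hτ : 0 < τ x t)
    (hτd : DifferentiableAt ℝ (fun y => τ y t) x) (hSd : DifferentiableAt ℝ (fun y => S y t) x) :
    alphaF K cv γ u τ S x t = pdx u x t + gradQ K cv γ τ S x t ∧
    betaF K cv γ u τ S x t = pdx u x t - gradQ K cv γ τ S x t := by
  have h₁ : pdx (etaP K γ τ) x t = -(cP K γ τ x t * pdx τ x t) :=
    (hasDerivAt_etaP_comp (X := fun y => y) (Y := fun _ => t) hγ hτ hτd.hasDerivAt).deriv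
  have h₂ : pdx (mF cv S) x t = mF cv S x t * (pdx S x t / (2 * cv)) :=
    (hasDerivAt_mF_comp (X := fun y => y) (Y := fun _ => t) hSd.hasDerivAt).deriv
  unfold alphaF betaF gradQ
  rw [h₁, h₂]
  constructor <;> ring

theorem pdx_mF {cv : ℝ} {S : ℝ → ℝ → ℝ} {x t : ℝ} (hSd : DifferentiableAt ℝ (fun y => S y t) x) :
    pdx (mF cv S) x t = mF cv S x t * (pdx S x t / (2 * cv)) :=
  (hasDerivAt_mF_comp (X := fun y => y) (Y := fun _ => t) hSd.hasDerivAt).deriv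

/-- The momentum equation in the form `u_t = −c q`. -/
theorem pdx_pF {K cv γ : ℝ} (hK : 0 < K) (hcv : 0 < cv) (hγ : 1 < γ) {τ S : ℝ → ℝ → ℝ} {x t : ℝ}
    (hτ : 0 < τ x t) (hτd : DifferentiableAt ℝ (fun y => τ y t) x)
    (hSd : DifferentiableAt ℝ (fun y => S y t) x) :
    pdx (pF K cv γ τ S) x t = mF cv S x t * cP K γ τ x t * gradQ K cv γ τ S x t := by
  have h₁ := (((hSd.hasDerivAt.div_const cv).exp).const_mul K).mul
    (hτd.hasDerivAt.rpow_const (p := -γ) (Or.inl hτ.ne'))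
  have h₂ : pdx (pF K cv γ τ S) x t = _ := h₁.deriv
  have hm : Real.exp (S x t / cv) = mF cv S x t ^ 2 := by
    unfold mF
    rw [← Real.exp_nat_mul]
    congr 1
    field_simp
    norm_num
  have hg : cP K γ τ x t ^ 2 = K * γ * τ x t ^ (-γ - 1) := by
    unfold cP
    rw [mul_pow, Real.sq_sqrt (by nlinarith), ← Real.rpow_natCast (τ x t ^ _), ← Real.rpow_mul hτ.le]
    congr 2
    push_cast
    ring
  have hp : τ x t ^ (-γ) = τ x t ^ (-γ - 1) * τ x t := by
    rw [← Real.rpow_add_one hτ.ne']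
    ring_nf
  have hγ0 : γ ≠ 0 := by linarith
  have hγ1 : γ - 1 ≠ 0 := by linarith
  rw [h₂, hm, hp]
  unfold gradQ
  rw [etaP_eq_cP hτ]
  change K * (mF cv S x t ^ 2 * (pdx S x t / cv)) * (τ x t ^ (-γ - 1) * τ x t)
    + K * mF cv S x t ^ 2 * (pdx τ x t * -γ * τ x t ^ (-γ - 1)) = _
  have hr : τ x t ^ (-γ - 1) = cP K γ τ x t ^ 2 / (K * γ) := by
    rw [hg]
    field_simp
  rw [hr]
  field_simp
  ring

/-- A classical solution of the full Euler equations on the strip. -/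
structure IsEulerSolution (K cv γ : ℝ) (T : EReal) (u τ S : ℝ → ℝ → ℝ) : Prop where
  u_reg : ContDiffOn ℝ 2 (fun p : ℝ × ℝ => u p.1 p.2) (strip T)
  τ_reg : ContDiffOn ℝ 2 (fun p : ℝ × ℝ => τ p.1 p.2) (strip T)
  S_reg : ContDiffOn ℝ 2 (fun p : ℝ × ℝ => S p.1 p.2) (strip T)
  τ_pos : ∀ x t : ℝ, 0 ≤ t → (t : EReal) < T → 0 < τ x t
  pde : ∀ x t : ℝ, 0 ≤ t → (t : EReal) < T → fullEuler K cv γ u τ S x t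

namespace IsEulerSolution

variable {K cv γ : ℝ} {T : EReal} {u τ S : ℝ → ℝ → ℝ}

theorem differentiableAt_slice_τ (hsol : IsEulerSolution K cv γ T u τ S) {x t : ℝ} (ht : 0 ≤ t)
    (htT : (t : EReal) < T) : DifferentiableAt ℝ (fun y => τ y t) x :=
  (hasDerivAt_pdx_of_strip (hsol.τ_reg.differentiableOn (by norm_num)) ht htT).differentiableAt

theorem differentiableAt_slice_S (hsol : IsEulerSolution K cv γ T u τ S) {x t : ℝ} (ht : 0 ≤ t)
    (htT : (t : EReal) < T) : DifferentiableAt ℝ (fun y => S y t) x :=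
  (hasDerivAt_pdx_of_strip (hsol.S_reg.differentiableOn (by norm_num)) ht htT).differentiableAt

theorem pdt_u (hsol : IsEulerSolution K cv γ T u τ S) (hK : 0 < K) (hcv : 0 < cv) (hγ : 1 < γ)
    {x t : ℝ} (ht : 0 ≤ t) (htT : (t : EReal) < T) :
    pdt u x t = -(mF cv S x t * cP K γ τ x t * gradQ K cv γ τ S x t) := by
  rw [← pdx_pF hK hcv hγ (hsol.τ_pos x t ht htT) (hsol.differentiableAt_slice_τ ht htT)
    (hsol.differentiableAt_slice_S ht htT)]
  linarith [(hsol.pde x t ht htT).2.1]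

theorem pdt_τ (hsol : IsEulerSolution K cv γ T u τ S) {x t : ℝ} (ht : 0 ≤ t)
    (htT : (t : EReal) < T) : pdt τ x t = pdx u x t := by
  linarith [(hsol.pde x t ht htT).1]

/-- Backward derivative of the Riemann variables `u ± mη` along characteristic directions. -/
theorem hasDerivAt_riemann (hsol : IsEulerSolution K cv γ T u τ S) (hK : 0 < K) (hcv : 0 < cv)
    (hγ : 1 < γ) {x t : ℝ} (ht : 0 < t) (htT : (t : EReal) < T) {σ : ℝ} (hσ : σ ^ 2 = 1) {c : ℝ}
    (hc : c = mF cv S x t * cP K γ τ x t) :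
    HasDerivAt (fun h : ℝ => u (x + h * (-(σ * c))) (t + h * (-1))
        + σ * (mF cv S (x + h * (-(σ * c))) (t + h * (-1))
          * etaP K γ τ (x + h * (-(σ * c))) (t + h * (-1))))
      (-(c * (pdx S x t / (2 * cv)) * (mF cv S x t * etaP K γ τ x t) / γ)) 0 := by
  have hτ := hsol.τ_pos x t ht.le htT
  have hnhds := strip_mem_nhds (x := x) ht htT
  have hu := (exists_second_derivs (hsol.u_reg.contDiffAt hnhds)).1 (-(σ * c)) (-1)
  have hτd := (exists_second_derivs (hsol.τ_reg.contDiffAt hnhds)).1 (-(σ * c)) (-1)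
  have hSd := (exists_second_derivs (hsol.S_reg.contDiffAt hnhds)).1 (-(σ * c)) (-1)
  have hτ0 : 0 < τ (x + 0 * (-(σ * c))) (t + 0 * (-1)) := by simpa using hτ
  have hη := hasDerivAt_etaP_comp (K := K) hγ hτ0 hτd
  have hm := hasDerivAt_mF_comp (cv := cv) hSd
  refine (hu.add ((hm.mul hη).const_mul σ)).congr_deriv ?_
  simp only [zero_mul, add_zero]
  rw [hsol.pdt_u hK hcv hγ ht.le htT, hsol.pdt_τ ht.le htT, (hsol.pde x t ht.le htT).2.2,
    gradQ, etaP_eq_cP hτ, hc]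
  have hγ0 : γ ≠ 0 := by linarith
  have hγ1 : γ - 1 ≠ 0 := by linarith
  field_simp
  ring_nf
  simp only [hσ]
  ring

/-- Backward derivative of the weighted gradient variables along characteristic directions. -/
theorem exists_hasDerivAt_weighted (hsol : IsEulerSolution K cv γ T u τ S) (hK : 0 < K)
    (hcv : 0 < cv) (hγ : 1 < γ) (ε : ℝ) {x t : ℝ} (ht : 0 < t) (htT : (t : EReal) < T) {σ : ℝ}
    (hσ : σ = 1 ∨ σ = -1) {c P q a b k : ℝ} (hc : c = mF cv S x t * cP K γ τ x t)
    (hP : P = etaP K γ τ x t ^ (2 * ε / (γ - 1))) (hq : q = gradQ K cv γ τ S x t)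
    (ha : a = P * (pdx u x t + σ * q)) (hb : b = P * (pdx u x t - σ * q))
    (hk : k = (γ - 1) / (γ * (γ + 1)) * (etaP K γ τ x t * P)
      * (mF cv S x t * (pdx S x t / (2 * cv)))) :
    ∃ d : ℝ, HasDerivAt (fun h : ℝ =>
        etaP K γ τ (x + h * (-(σ * c))) (t + h * (-1)) ^ (2 * ε / (γ - 1))
          * (pdx u (x + h * (-(σ * c))) (t + h * (-1))
            + σ * gradQ K cv γ τ S (x + h * (-(σ * c))) (t + h * (-1)))) d 0 ∧
      P * d = -((γ + 1) / (4 * τ x t) * (σ * k * ((3 - 4 * ε) * a + b)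
        + (1 - 4 * ε / (γ + 1)) * a * b - a ^ 2)) := by
  have hτ := hsol.τ_pos x t ht.le htT
  have hη0 : 0 < etaP K γ τ x t := etaP_pos hK hγ hτ
  have hnhds := strip_mem_nhds (x := x) ht htT
  have hlineT : ∀ᶠ h in 𝓝 (0 : ℝ), ((x + h * 1, t + h * 0) : ℝ × ℝ) ∈ strip T := by
    have hcont : ContinuousAt (fun h : ℝ => ((x + h * 1, t + h * 0) : ℝ × ℝ)) 0 := by fun_prop
    exact hcont.eventually (by simpa using hnhds)
  obtain ⟨hu, uxx, uxt, huxd, hutd⟩ := exists_second_derivs (hsol.u_reg.contDiffAt hnhds)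
  obtain ⟨hτl, τxx, τxt, hτxd, hτtd⟩ := exists_second_derivs (hsol.τ_reg.contDiffAt hnhds)
  obtain ⟨hSl, Sxx, Sxt, hSxd, hStd⟩ := exists_second_derivs (hsol.S_reg.contDiffAt hnhds)
  have hτxt : τxt = uxx := by
    have h₁ := huxd 1 0
    have h₂ : HasDerivAt (fun h : ℝ => pdx u (x + h * 1) (t + h * 0)) τxt 0 := by
      refine hτtd.congr_of_eventuallyEq ?_
      filter_upwards [hlineT] with h hh using (hsol.pdt_τ hh.1 hh.2).symm
    simpa using h₂.unique h₁
  have hSxt : Sxt = 0 := by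
    have h₂ : HasDerivAt (fun _ : ℝ => (0 : ℝ)) Sxt 0 := by
      refine hStd.congr_of_eventuallyEq ?_
      filter_upwards [hlineT] with h hh using (hsol.pde _ _ hh.1 hh.2).2.2.symm
    exact h₂.unique (hasDerivAt_const 0 0)
  have hτ0 : ∀ v w : ℝ, 0 < τ (x + 0 * v) (t + 0 * w) := by
    intro v w
    simpa using hτ
  have hq1 := hasDerivAt_gradQ_comp (K := K) (cv := cv) hγ (hτ0 1 0) (hτl 1 0) (hSl 1 0)
    (hτxd 1 0) (hSxd 1 0)
  have hm1 := hasDerivAt_mF_comp (cv := cv) (hSl 1 0)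
  have hg1 := hasDerivAt_cP_comp (K := K) (γ := γ) (hτ0 1 0) (hτl 1 0)
  have huxt := hutd.unique ((((hm1.mul hg1).mul hq1).neg).congr_of_eventuallyEq (by
    filter_upwards [hlineT] with h hh using hsol.pdt_u hK hcv hγ hh.1 hh.2))
  have hql := hasDerivAt_gradQ_comp (K := K) (cv := cv) hγ (hτ0 (-(σ * c)) (-1))
    (hτl (-(σ * c)) (-1)) (hSl (-(σ * c)) (-1)) (hτxd (-(σ * c)) (-1)) (hSxd (-(σ * c)) (-1))
  have hηl := hasDerivAt_etaP_comp (K := K) hγ (hτ0 (-(σ * c)) (-1)) (hτl (-(σ * c)) (-1))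
  have hPl := hηl.rpow_const (p := 2 * ε / (γ - 1)) (Or.inl (by simpa using hη0.ne'))
  refine ⟨_, hPl.mul ((huxd (-(σ * c)) (-1)).add (hql.const_mul σ)), ?_⟩
  simp only [Pi.mul_apply, zero_mul, add_zero, one_mul, mul_one] at huxt ⊢
  rw [Real.rpow_sub_one hη0.ne', ← hP, ← hq, huxt, hτxt, hSxt, hsol.pdt_τ ht.le htT,
    (hsol.pde x t ht.le htT).2.2, ha, hb, hk, ← hq]
  have hqq : q = _ := hq.trans rfl
  rw [gradQ] at hqq
  rw [etaP_eq_cP hτ] at hqq ⊢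
  rw [hc]
  have hg := cP_pos hK hγ hτ
  have hγ0 : γ ≠ 0 := by linarith
  have hγ1 : γ - 1 ≠ 0 := by linarith
  have hγ2 : γ + 1 ≠ 0 := by linarith
  clear hql hPl hηl huxt hq1 hm1 hg1
  generalize cP K γ τ x t = g at *
  generalize mF cv S x t = m at *
  generalize τ x t = θ at *
  generalize pdx τ x t = τx at *
  generalize pdx S x t = Sx at *
  generalize pdx u x t = ux at *
  rw [hqq]
  rcases hσ with rfl | rfl
  · field_simp
    ring
  · field_simp
    ring

end IsEulerSolution

namespace IsEulerSolution

variable {K cv γ : ℝ} {T : EReal} {u τ S : ℝ → ℝ → ℝ}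

theorem continuousOn_mF (hsol : IsEulerSolution K cv γ T u τ S) :
    ContinuousOn (fun p : ℝ × ℝ => mF cv S p.1 p.2) (strip T) :=
  (hsol.S_reg.continuousOn.div_const (2 * cv)).rexp

theorem continuousOn_etaP (hsol : IsEulerSolution K cv γ T u τ S) :
    ContinuousOn (fun p : ℝ × ℝ => etaP K γ τ p.1 p.2) (strip T) :=
  continuousOn_const.mul (hsol.τ_reg.continuousOn.rpow_const fun p hp =>
    Or.inl (hsol.τ_pos p.1 p.2 hp.1 hp.2).ne')

theorem continuousOn_cP (hsol : IsEulerSolution K cv γ T u τ S) :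
    ContinuousOn (fun p : ℝ × ℝ => cP K γ τ p.1 p.2) (strip T) :=
  continuousOn_const.mul (hsol.τ_reg.continuousOn.rpow_const fun p hp =>
    Or.inl (hsol.τ_pos p.1 p.2 hp.1 hp.2).ne')

theorem continuousOn_gradQ (hsol : IsEulerSolution K cv γ T u τ S) (hT : 0 < T) :
    ContinuousOn (fun p : ℝ × ℝ => gradQ K cv γ τ S p.1 p.2) (strip T) :=
  ((continuousOn_const.mul (hsol.continuousOn_mF.mul
    ((continuousOn_pdx_strip hT hsol.S_reg).div_const (2 * cv)))).mul hsol.continuousOn_etaP).sub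
    ((hsol.continuousOn_mF.mul hsol.continuousOn_cP).mul (continuousOn_pdx_strip hT hsol.τ_reg))

/-- The entropy does not depend on time. -/
theorem S_eq (hsol : IsEulerSolution K cv γ T u τ S) {x t : ℝ} (ht : 0 ≤ t)
    (htT : (t : EReal) < T) : S x t = S x 0 := by
  rcases ht.eq_or_lt with rfl | hpos
  · rfl
  have hlt : ∀ s ∈ Icc 0 t, (s : EReal) < T := fun s hs =>
    lt_of_le_of_lt (EReal.coe_le_coe_iff.2 hs.2) htT
  have hcont : ContinuousOn (fun s => S x s) (Icc 0 t) :=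
    hsol.S_reg.continuousOn.comp (f := fun s : ℝ => (x, s)) (by fun_prop)
      fun s hs => ⟨hs.1, hlt s hs⟩
  have hder : ∀ s ∈ Ioo 0 t, HasDerivAt (fun s => S x s) 0 s := by
    intro s hs
    have hsT := hlt s ⟨hs.1.le, hs.2.le⟩
    have hd : DifferentiableAt ℝ (fun p : ℝ × ℝ => S p.1 p.2) (x, s) :=
      (hsol.S_reg.contDiffAt (strip_mem_nhds hs.1 hsT)).differentiableAt (by norm_num)
    have hds : DifferentiableAt ℝ (fun s => S x s) s :=
      DifferentiableAt.comp (g := fun p : ℝ × ℝ => S p.1 p.2) (f := fun s : ℝ => (x, s)) s hd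
        (by fun_prop)
    have h0 : deriv (fun s => S x s) s = 0 := (hsol.pde x s hs.1.le hsT).2.2
    exact h0 ▸ hds.hasDerivAt
  obtain ⟨s, _, hs⟩ := exists_hasDerivAt_eq_slope (fun s => S x s) (fun _ => 0) hpos hcont hder
  have := (div_eq_zero_iff.1 hs.symm).resolve_right (by linarith)
  linarith

theorem pdx_S_eq (hsol : IsEulerSolution K cv γ T u τ S) {x t : ℝ} (ht : 0 ≤ t)
    (htT : (t : EReal) < T) : pdx S x t = pdx S x 0 := by
  unfold pdx
  congr 1
  ext y
  exact hsol.S_eq ht htT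

/-- The wave speed is controlled by `mη` and the entropy. -/
theorem speed_le (hsol : IsEulerSolution K cv γ T u τ S) (hK : 0 < K) (hcv : 0 < cv) (hγ : 1 < γ)
    {C B : ℝ} (hC : ∀ x, |S x 0| ≤ C) {x t : ℝ} (ht : 0 ≤ t) (htT : (t : EReal) < T)
    (hB : mF cv S x t * etaP K γ τ x t ≤ B) :
    mF cv S x t * cP K γ τ x t ≤ Real.exp (C / (2 * cv)) * (Real.sqrt (K * γ)
      * (B * Real.exp (C / (2 * cv)) * (γ - 1) / (2 * Real.sqrt (K * γ)))
        ^ ((γ + 1) / (γ - 1))) := by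
  have hτ := hsol.τ_pos x t ht htT
  have hs : 0 < Real.sqrt (K * γ) := Real.sqrt_pos.2 (mul_pos hK (by linarith))
  have hγ1 : 0 < γ - 1 := by linarith
  have hS := abs_le.1 (hsol.S_eq ht htT ▸ hC x)
  have hm : mF cv S x t ≤ Real.exp (C / (2 * cv)) :=
    Real.exp_le_exp.2 (div_le_div_of_nonneg_right hS.2 (by linarith))
  have hm' : 1 ≤ mF cv S x t * Real.exp (C / (2 * cv)) := by
    unfold mF
    rw [← Real.exp_add, ← add_div]
    exact Real.one_le_exp (div_nonneg (by linarith) (by linarith))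
  have hη := etaP_pos hK hγ hτ
  have hηB : etaP K γ τ x t ≤ B * Real.exp (C / (2 * cv)) := by
    calc etaP K γ τ x t = 1 * etaP K γ τ x t := (one_mul _).symm
      _ ≤ mF cv S x t * Real.exp (C / (2 * cv)) * etaP K γ τ x t := by gcongr
      _ = mF cv S x t * etaP K γ τ x t * Real.exp (C / (2 * cv)) := by ring
      _ ≤ B * Real.exp (C / (2 * cv)) := by gcongr
  have hy : τ x t ^ (-(γ - 1) / 2) = etaP K γ τ x t * (γ - 1) / (2 * Real.sqrt (K * γ)) := by
    unfold etaP
    field_simp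
  have hg : cP K γ τ x t = Real.sqrt (K * γ)
      * (etaP K γ τ x t * (γ - 1) / (2 * Real.sqrt (K * γ))) ^ ((γ + 1) / (γ - 1)) := by
    rw [← hy, ← Real.rpow_mul hτ.le]
    unfold cP
    congr 2
    field_simp
  rw [hg]
  gcongr

/-- Barrier bound for `mη` on a space interval on which the entropy varies little. The barriers
`E true`, `E false` for the two Riemann variables are increasing and decreasing in `x`. -/
theorem barrier (hsol : IsEulerSolution K cv γ T u τ S) (hK : 0 < K) (hcv : 0 < cv) (hγ : 1 < γ)
    {a b L M x₀ t₁ : ℝ} (hM : 0 < M) (hL : 0 ≤ L) (ht₁ : 0 ≤ t₁) (ht₁T : (t₁ : EReal) < T)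
    (ha : a ≤ x₀) (hb : x₀ ≤ b)
    {sg : Bool → ℝ} (hsg : sg = fun s => if s then 1 else -1) {E : Bool → ℝ → ℝ}
    (hE : ∀ s, ∀ x ∈ Icc a b, 0 ≤ E s x ∧ E s x ≤ 1)
    (hEd : ∀ s x, HasDerivAt (E s) (sg s * (3 / (2 * cv * γ) * |pdx S x 0|)) x)
    (hLM : ∀ x t : ℝ, 0 ≤ t → (t : EReal) < T → mF cv S x t * etaP K γ τ x t ≤ 3 * M →
      mF cv S x t * cP K γ τ x t ≤ L)
    (hbd : ∀ p ∈ backwardTriangle a b L x₀ t₁, (p.2 = 0 ∨ p.1 = a ∨ p.1 = b) →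
      |u p.1 p.2| + mF cv S p.1 p.2 * etaP K γ τ p.1 p.2 < M) :
    mF cv S x₀ t₁ * etaP K γ τ x₀ t₁ ≤ 3 * M := by
  set F : Bool × Bool → ℝ × ℝ → ℝ := fun i p =>
    sg i.2 * (u p.1 p.2 + sg i.1 * (mF cv S p.1 p.2 * etaP K γ τ p.1 p.2))
      - (M * (1 + E i.1 p.1) + M / (t₁ + 1) * p.2) with hFdef
  set Q := backwardTriangle a b L x₀ t₁ with hQdef
  have hQT : ∀ p ∈ Q, p ∈ strip T := fun p hp =>
    ⟨hp.2.2.1, lt_of_le_of_lt (EReal.coe_le_coe_iff.2 hp.2.2.2.1) ht₁T⟩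
  have hsg1 : ∀ s, sg s = 1 ∨ sg s = -1 := by
    intro s
    cases s <;> simp [hsg]
  have hsgsq : ∀ s, sg s ^ 2 = 1 := by
    intro s
    rcases hsg1 s with h | h <;> rw [h] <;> norm_num
  have hδ : 0 < M / (t₁ + 1) := div_pos hM (by linarith)
  have hδt : ∀ p ∈ Q, M / (t₁ + 1) * p.2 ≤ M := by
    intro p hp
    have h1 : p.2 ≤ t₁ + 1 := by linarith [hp.2.2.2.1]
    calc M / (t₁ + 1) * p.2 ≤ M / (t₁ + 1) * (t₁ + 1) := by gcongr
      _ = M := by field_simp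
  have hη_le : ∀ p ∈ Q, (∀ i, F i p ≤ 0) → mF cv S p.1 p.2 * etaP K γ τ p.1 p.2 ≤ 3 * M := by
    intro p hp hle
    have h₁ := hle (true, true)
    have h₂ := hle (false, false)
    simp only [hFdef, hsg, if_true, Bool.false_eq_true, if_false] at h₁ h₂
    have e₁ := (hE true p.1 ⟨hp.1, hp.2.1⟩).2
    have e₂ := (hE false p.1 ⟨hp.1, hp.2.1⟩).2
    have := hδt p hp
    nlinarith
  have hapex : (x₀, t₁) ∈ Q := ⟨ha, hb, ht₁, le_rfl, by simp⟩
  refine hη_le _ hapex fun i => le_of_lt ?_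
  refine neg_of_backward_increasing (isCompact_backwardTriangle a b L x₀ t₁) (F := F)
    (fun i => ?_) (fun p hp => ?_) _ hapex i
  · have hEc : Continuous (E i.1) :=
      continuous_iff_continuousAt.2 fun x => (hEd i.1 x).continuousAt
    have h₁ : ContinuousOn (fun p : ℝ × ℝ => sg i.2 * (u p.1 p.2
        + sg i.1 * (mF cv S p.1 p.2 * etaP K γ τ p.1 p.2))) (strip T) :=
      continuousOn_const.mul (hsol.u_reg.continuousOn.add
        (continuousOn_const.mul (hsol.continuousOn_mF.mul hsol.continuousOn_etaP)))
    refine (h₁.mono hQT).sub (Continuous.continuousOn ?_)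
    fun_prop
  · have hpT := hQT p hp
    have hτ := hsol.τ_pos p.1 p.2 hpT.1 hpT.2
    have hmη : 0 < mF cv S p.1 p.2 * etaP K γ τ p.1 p.2 :=
      mul_pos (mF_pos _ _ _ _) (etaP_pos hK hγ hτ)
    by_cases hbdry : p.2 = 0 ∨ p.1 = a ∨ p.1 = b
    · left
      intro i
      have h₁ := hbd p hp hbdry
      have h₂ := abs_le.1 (le_refl |u p.1 p.2|)
      have e := (hE i.1 p.1 ⟨hp.1, hp.2.1⟩).1
      have hδ0 := mul_nonneg hδ.le hpT.1
      have hME := mul_nonneg hM.le e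
      simp only [hFdef]
      rcases hsg1 i.1 with h | h <;> rcases hsg1 i.2 with h' | h' <;> rw [h, h'] <;> linarith
    right
    push Not at hbdry
    obtain ⟨hp0, hpa, hpb⟩ := hbdry
    have ht : 0 < p.2 := lt_of_le_of_ne hpT.1 (Ne.symm hp0)
    have ha' : a < p.1 := lt_of_le_of_ne hp.1 (Ne.symm hpa)
    have hb' : p.1 < b := lt_of_le_of_ne hp.2.1 hpb
    refine ⟨⟨0, eventually_mem_backwardTriangle hp ha' hb' ht (by simpa using hL)⟩,
      fun hle i _ => ?_⟩
    have hη3 := hη_le p hp hle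
    set c := mF cv S p.1 p.2 * cP K γ τ p.1 p.2 with hc
    have hc0 : 0 < c := mul_pos (mF_pos _ _ _ _) (cP_pos hK hγ hτ)
    have hcL : c ≤ L := hLM p.1 p.2 hpT.1 hpT.2 hη3
    have hR := hsol.hasDerivAt_riemann hK hcv hγ ht hpT.2 (hsgsq i.1) hc
    have hlin : ∀ v y : ℝ, HasDerivAt (fun h : ℝ => y + h * v) v 0 := by
      intro v y
      simpa using ((hasDerivAt_id (0 : ℝ)).mul_const v).const_add y
    have hEl : HasDerivAt (fun h : ℝ => E i.1 (p.1 + h * (-(sg i.1 * c))))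
        (sg i.1 * (3 / (2 * cv * γ) * |pdx S p.1 0|) * (-(sg i.1 * c))) 0 := by
      refine HasDerivAt.comp (h₂ := E i.1) 0 ?_ (hlin (-(sg i.1 * c)) p.1)
      simpa using hEd i.1 p.1
    have hFd := (hR.const_mul (sg i.2)).sub (((hEl.const_add 1).const_mul M).add
      ((hlin (-1) p.2).const_mul (M / (t₁ + 1))))
    refine ⟨-(sg i.1 * c), _, ?_, eventually_mem_backwardTriangle hp ha' hb' ht ?_, hFd⟩
    · rw [hsol.pdx_S_eq hpT.1 hpT.2]
      have hγ0 : 0 < γ := by linarith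
      set w := c / (2 * cv * γ) with hw
      have hw0 : 0 < w := by positivity
      have e₁ : c * (pdx S p.1 0 / (2 * cv)) * (mF cv S p.1 p.2 * etaP K γ τ p.1 p.2) / γ
          = w * (pdx S p.1 0 * (mF cv S p.1 p.2 * etaP K γ τ p.1 p.2)) := by
        rw [hw]
        field_simp
      have e₂ : sg i.1 * (3 / (2 * cv * γ) * |pdx S p.1 0|) * (-(sg i.1 * c))
          = -(sg i.1 ^ 2 * (w * (3 * |pdx S p.1 0|))) := by
        rw [hw]
        field_simp
      rw [e₁, e₂, hsgsq]
      have h₁ : |sg i.2 * (pdx S p.1 0 * (mF cv S p.1 p.2 * etaP K γ τ p.1 p.2))|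
          ≤ |pdx S p.1 0| * (3 * M) := by
        rw [abs_mul, abs_mul, abs_of_pos hmη]
        have : |sg i.2| = 1 := by rcases hsg1 i.2 with h | h <;> rw [h] <;> norm_num
        rw [this, one_mul]
        gcongr
      have h₂ := mul_le_mul_of_nonneg_left (abs_le.1 h₁).2 hw0.le
      linarith
    · rw [abs_neg, abs_mul, abs_of_pos hc0]
      have : |sg i.1| = 1 := by rcases hsg1 i.1 with h | h <;> rw [h] <;> norm_num
      rwa [this, one_mul]

end IsEulerSolution

namespace IsEulerSolution

variable {K cv γ : ℝ} {T : EReal} {u τ S : ℝ → ℝ → ℝ}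

theorem hasDerivAt_S_zero (hsol : IsEulerSolution K cv γ T u τ S) (hT : 0 < T) (x : ℝ) :
    HasDerivAt (fun y => S y 0) (pdx S x 0) x :=
  (hsol.differentiableAt_slice_S le_rfl (by simpa using hT)).hasDerivAt

theorem continuous_pdx_S_zero (hsol : IsEulerSolution K cv γ T u τ S) (hT : 0 < T) :
    Continuous (fun x => pdx S x 0) := by
  rw [← continuousOn_univ]
  exact (continuousOn_pdx_strip hT hsol.S_reg).comp (f := fun x : ℝ => (x, (0 : ℝ))) (by fun_prop)
    fun x _ => ⟨le_rfl, by simpa using hT⟩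

/-- An interval on which the total variation of the entropy is small carries the barriers needed to
bound `mη`. -/
theorem mul_etaP_le_of_integral_le (hsol : IsEulerSolution K cv γ T u τ S) (hK : 0 < K)
    (hcv : 0 < cv) (hγ : 1 < γ) (hT : 0 < T)
    {a b L M x₀ t₁ : ℝ} (hM : 0 < M) (hL : 0 ≤ L) (ht₁ : 0 ≤ t₁) (ht₁T : (t₁ : EReal) < T)
    (ha : a ≤ x₀) (hb : x₀ ≤ b) (hint : 3 / (2 * cv * γ) * ∫ x in a..b, |pdx S x 0| ≤ 1)
    (hLM : ∀ x t : ℝ, 0 ≤ t → (t : EReal) < T → mF cv S x t * etaP K γ τ x t ≤ 3 * M →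
      mF cv S x t * cP K γ τ x t ≤ L)
    (hbd : ∀ p ∈ backwardTriangle a b L x₀ t₁, (p.2 = 0 ∨ p.1 = a ∨ p.1 = b) →
      |u p.1 p.2| + mF cv S p.1 p.2 * etaP K γ τ p.1 p.2 < M) :
    mF cv S x₀ t₁ * etaP K γ τ x₀ t₁ ≤ 3 * M := by
  have hcont : Continuous (fun x => |pdx S x 0|) := (hsol.continuous_pdx_S_zero hT).abs
  have hii : ∀ y z : ℝ, IntervalIntegrable (fun x => |pdx S x 0|) volume y z :=
    fun y z => hcont.intervalIntegrable y z
  have hκ : 0 ≤ 3 / (2 * cv * γ) := by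
    have : 0 < γ := by linarith
    positivity
  have hnn : ∀ y z : ℝ, y ≤ z → 0 ≤ ∫ x in y..z, |pdx S x 0| := fun y z hyz =>
    intervalIntegral.integral_nonneg hyz fun _ _ => abs_nonneg _
  refine hsol.barrier hK hcv hγ hM hL ht₁ ht₁T ha hb rfl
    (E := fun s x => if s then 3 / (2 * cv * γ) * ∫ y in a..x, |pdx S y 0|
      else 3 / (2 * cv * γ) * ∫ y in x..b, |pdx S y 0|) ?_ ?_ hLM hbd
  · intro s x hx
    have hsplit := intervalIntegral.integral_add_adjacent_intervals (hii a x) (hii x b)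
    have h₁ := mul_nonneg hκ (hnn a x hx.1)
    have h₂ := mul_nonneg hκ (hnn x b hx.2)
    rw [← hsplit, mul_add] at hint
    cases s
    · simp only [Bool.false_eq_true, if_false]
      exact ⟨h₂, by linarith⟩
    · simp only [if_true]
      exact ⟨h₁, by linarith⟩
  · intro s x
    cases s
    · simp only [Bool.false_eq_true, if_false]
      refine ((intervalIntegral.integral_hasDerivAt_left (hii x b)
        (hcont.stronglyMeasurableAtFilter _ _) hcont.continuousAt).const_mul _).congr_deriv ?_
      ring
    · simp only [if_true]
      refine ((intervalIntegral.integral_hasDerivAt_right (hii a x)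
        (hcont.stronglyMeasurableAtFilter _ _) hcont.continuousAt).const_mul _).congr_deriv ?_
      ring

/-- The total variation of the entropy is small outside a bounded interval. -/
theorem exists_integral_tail_le (hsol : IsEulerSolution K cv γ T u τ S) (hT : 0 < T)
    (hBV : BoundedVariationOn (fun x => S x 0) univ) {δ : ℝ} (hδ : 0 < δ) :
    ∃ R : ℝ, 0 ≤ R ∧ ∀ a b : ℝ, a ≤ b → (R ≤ a ∨ b ≤ -R) → ∫ x in a..b, |pdx S x 0| ≤ δ := by
  have htop := hBV.tendsto_eVariationOn_Ici_zero
  have hbot := hBV.tendsto_eVariationOn_Iic_zero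
  simp only [Filter.principal_univ, top_inf_eq, univ_inter] at htop hbot
  have hδ' : (0 : ENNReal) < ENNReal.ofReal δ := ENNReal.ofReal_pos.2 hδ
  obtain ⟨R₁, hR₁⟩ := Filter.eventually_atTop.1 (htop.eventually (gt_mem_nhds hδ'))
  obtain ⟨R₂, hR₂⟩ := Filter.eventually_atBot.1 (hbot.eventually (gt_mem_nhds hδ'))
  refine ⟨max 0 (max R₁ (-R₂)), le_max_left _ _, fun a b hab h => ?_⟩
  have hR₁' : R₁ ≤ max 0 (max R₁ (-R₂)) := (le_max_left _ _).trans (le_max_right _ _)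
  have hR₂' : -R₂ ≤ max 0 (max R₁ (-R₂)) := (le_max_right _ _).trans (le_max_right _ _)
  rcases h with h | h
  · refine (integral_abs_deriv_le_eVariationOn (hsol.hasDerivAt_S_zero hT)
      (hsol.continuous_pdx_S_zero hT) hab (s := Ici a) (fun x hx => hx.1) hBV).trans ?_
    exact ENNReal.toReal_le_of_le_ofReal hδ.le (hR₁ a (by linarith)).le
  · refine (integral_abs_deriv_le_eVariationOn (hsol.hasDerivAt_S_zero hT)
      (hsol.continuous_pdx_S_zero hT) hab (s := Iic b) (fun x hx => hx.2) hBV).trans ?_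
    exact ENNReal.toReal_le_of_le_ofReal hδ.le (hR₂ b (by linarith)).le

/-- The initial Riemann variables are bounded. -/
theorem initial_bound (hsol : IsEulerSolution K cv γ T u τ S) (hcv : 0 < cv)
    (hγ : 1 < γ) (hT : 0 < T) {C : ℝ} (hu : ∀ x, |u x 0| ≤ C) (hτ : ∀ x, 1 / τ x 0 ≤ C)
    (hS : ∀ x, |S x 0| ≤ C) (x : ℝ) :
    |u x 0| + mF cv S x 0 * etaP K γ τ x 0 ≤ C + Real.exp (C / (2 * cv))
      * (2 * Real.sqrt (K * γ) / (γ - 1) * C ^ ((γ - 1) / 2)) := by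
  have hτ0 : 0 < τ x 0 := hsol.τ_pos x 0 le_rfl (by simpa using hT)
  have hγ1 : 0 < γ - 1 := by linarith
  have hm : mF cv S x 0 ≤ Real.exp (C / (2 * cv)) :=
    Real.exp_le_exp.2 (div_le_div_of_nonneg_right (abs_le.1 (hS x)).2 (by linarith))
  have hη : etaP K γ τ x 0 ≤ 2 * Real.sqrt (K * γ) / (γ - 1) * C ^ ((γ - 1) / 2) := by
    have hpow : τ x 0 ^ (-(γ - 1) / 2) = (1 / τ x 0) ^ ((γ - 1) / 2) := by
      rw [one_div, Real.inv_rpow hτ0.le, ← Real.rpow_neg hτ0.le, neg_div]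
    unfold etaP
    rw [hpow]
    have := hτ x
    have h0 : 0 ≤ 1 / τ x 0 := by positivity
    gcongr
  have hη0 : 0 ≤ etaP K γ τ x 0 := by unfold etaP; positivity
  exact add_le_add (hu x) (mul_le_mul hm hη hη0 (Real.exp_nonneg _))

/-- The wave speed is bounded on every time slab `ℝ × [0, t₀]`. -/
theorem exists_speed_bound (hsol : IsEulerSolution K cv γ T u τ S) (hK : 0 < K) (hcv : 0 < cv)
    (hγ : 1 < γ) (hT : 0 < T) {C : ℝ} (hu : ∀ x, |u x 0| ≤ C) (hτ : ∀ x, 1 / τ x 0 ≤ C)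
    (hS : ∀ x, |S x 0| ≤ C) (hBV : BoundedVariationOn (fun x => S x 0) univ) {t₀ : ℝ}
    (ht₀T : (t₀ : EReal) < T) :
    ∃ L : ℝ, 0 ≤ L ∧ ∀ x t : ℝ, 0 ≤ t → t ≤ t₀ → mF cv S x t * cP K γ τ x t ≤ L := by
  have hγ0 : 0 < γ := by linarith
  have hκ : 0 < 3 / (2 * cv * γ) := by positivity
  obtain ⟨R, hR, hRint⟩ := hsol.exists_integral_tail_le hT hBV (inv_pos.2 hκ)
  have hRint' : ∀ a b : ℝ, a ≤ b → (R ≤ a ∨ b ≤ -R) →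
      3 / (2 * cv * γ) * ∫ x in a..b, |pdx S x 0| ≤ 1 := by
    intro a b hab h
    calc _ ≤ 3 / (2 * cv * γ) * (3 / (2 * cv * γ))⁻¹ :=
          mul_le_mul_of_nonneg_left (hRint a b hab h) hκ.le
      _ = 1 := mul_inv_cancel₀ hκ.ne'
  have hboxT : Icc (-R) R ×ˢ Icc 0 t₀ ⊆ strip T := fun p hp =>
    ⟨hp.2.1, lt_of_le_of_lt (EReal.coe_le_coe_iff.2 hp.2.2) ht₀T⟩
  obtain ⟨B, hB⟩ := (isCompact_Icc.prod isCompact_Icc).bddAbove_image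
    ((hsol.u_reg.continuousOn.abs.add
      (hsol.continuousOn_mF.mul hsol.continuousOn_etaP)).mono hboxT)
  set M₀ := C + Real.exp (C / (2 * cv)) * (2 * Real.sqrt (K * γ) / (γ - 1) * C ^ ((γ - 1) / 2))
    with hM₀
  set M := max 0 (max B M₀) + 1 with hMdef
  have hM : 0 < M := by positivity
  have hBM : B < M := by
    have : B ≤ max 0 (max B M₀) := (le_max_left _ _).trans (le_max_right _ _)
    linarith
  have hM₀M : M₀ < M := by
    have : M₀ ≤ max 0 (max B M₀) := (le_max_right _ _).trans (le_max_right _ _)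
    linarith
  have hbox : ∀ x t : ℝ, -R ≤ x → x ≤ R → 0 ≤ t → t ≤ t₀ →
      |u x t| + mF cv S x t * etaP K γ τ x t < M := fun x t h₁ h₂ h₃ h₄ =>
    lt_of_le_of_lt (hB ⟨(x, t), ⟨⟨h₁, h₂⟩, ⟨h₃, h₄⟩⟩, rfl⟩) hBM
  have hinit : ∀ x : ℝ, |u x 0| + mF cv S x 0 * etaP K γ τ x 0 < M := fun x =>
    lt_of_le_of_lt (hsol.initial_bound hcv hγ hT hu hτ hS x) hM₀M
  set L := Real.exp (C / (2 * cv)) * (Real.sqrt (K * γ)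
      * (3 * M * Real.exp (C / (2 * cv)) * (γ - 1) / (2 * Real.sqrt (K * γ)))
        ^ ((γ + 1) / (γ - 1))) with hLdef
  have hγ1 : 0 < γ - 1 := by linarith
  have hL : 0 ≤ L := by positivity
  have hLM : ∀ x t : ℝ, 0 ≤ t → (t : EReal) < T → mF cv S x t * etaP K γ τ x t ≤ 3 * M →
      mF cv S x t * cP K γ τ x t ≤ L := fun x t ht htT h => hsol.speed_le hK hcv hγ hS ht htT h
  refine ⟨L, hL, fun x t ht htt => ?_⟩
  have htT : (t : EReal) < T := lt_of_le_of_lt (EReal.coe_le_coe_iff.2 htt) ht₀T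
  refine hLM x t ht htT ?_
  have hLt : 0 ≤ L * t := mul_nonneg hL ht
  rcases le_total R x with hx | hx
  · refine hsol.mul_etaP_le_of_integral_le hK hcv hγ hT (a := R) (b := x + L * t + 1) hM hL ht htT
      hx (by linarith) (hRint' _ _ (by linarith) (Or.inl le_rfl)) hLM ?_
    rintro ⟨y, s⟩ ⟨-, -, hs, hst, hcone⟩ (h | h | h)
    · simp only at h
      subst h
      exact hinit y
    · simp only at h
      subst h
      exact hbox _ _ (by linarith) le_rfl hs (hst.trans htt)
    · simp only at h hcone hs
      have := (abs_le.1 hcone).2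
      have := mul_nonneg hL hs
      linarith
  rcases le_total x (-R) with hx' | hx'
  · refine hsol.mul_etaP_le_of_integral_le hK hcv hγ hT (a := x - L * t - 1) (b := -R) hM hL ht htT
      (by linarith) hx' (hRint' _ _ (by linarith) (Or.inr le_rfl)) hLM ?_
    rintro ⟨y, s⟩ ⟨-, -, hs, hst, hcone⟩ (h | h | h)
    · simp only at h
      subst h
      exact hinit y
    · simp only at h hcone hs
      have := (abs_le.1 hcone).1
      have := mul_nonneg hL hs
      linarith
    · simp only at h
      subst h
      exact hbox _ _ le_rfl (by linarith) hs (hst.trans htt)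
  · have := hbox x t hx' hx ht htt
    have := abs_nonneg (u x t)
    linarith

end IsEulerSolution

/-- The quadratic form driving the weighted gradient variables is negative when one of them
reaches `N` and the other does not exceed it. -/
theorem riccati_bracket_neg {γ ε κ N k b : ℝ} (hγ : 1 < γ) (hε0 : 0 < ε) (hε : ε < 1 / 4)
    (hk : |k| < κ) (hN₁ : 4 * (γ + 1) * κ / ε < N) (hN₂ : 2 * κ / (1 - 4 * ε / (γ + 1)) < N)
    (hb : b ≤ N) :
    k * ((3 - 4 * ε) * N + b) + (1 - 4 * ε / (γ + 1)) * N * b - N ^ 2 < 0 := by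
  have hκ : 0 < κ := (abs_nonneg k).trans_lt hk
  obtain ⟨hk₁, hk₂⟩ := abs_lt.1 hk
  have hγ1 : 0 < γ + 1 := by linarith
  set r := 4 * ε / (γ + 1) with hr
  have hr1 : 0 < 1 - r := by
    rw [sub_pos, hr, div_lt_one hγ1]
    linarith
  have hN : 0 < N := lt_trans (by positivity) hN₁
  have h₁ : 16 * κ < r * N := by
    rw [div_lt_iff₀ hε0] at hN₁
    rw [hr, div_mul_eq_mul_div, lt_div_iff₀ hγ1]
    linarith
  have h₂ : 0 < k + (1 - r) * N := by
    rw [div_lt_iff₀ hr1] at hN₂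
    linarith
  have h₃ : 4 * (1 - ε) * k - r * N < 0 := by nlinarith
  have h₄ := mul_le_mul_of_nonneg_left hb h₂.le
  have h₅ := mul_neg_of_neg_of_pos h₃ hN
  linarith

theorem k2e_eq {K cv γ ε : ℝ} (hK : 0 < K) (hγ : 1 < γ) {τ S : ℝ → ℝ → ℝ} {x t : ℝ}
    (hτ : 0 < τ x t) (hSd : DifferentiableAt ℝ (fun y => S y t) x) :
    k2e K cv γ ε τ S x t = (γ - 1) / (γ * (γ + 1))
      * (etaP K γ τ x t * etaP K γ τ x t ^ (2 * ε / (γ - 1)))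
      * (mF cv S x t * (pdx S x t / (2 * cv))) := by
  rw [k2e, pdx_mF hSd, Real.rpow_add (etaP_pos hK hγ hτ), Real.rpow_one]

/-- invariant upper bound `N` for the weighted gradient variables. -/
theorem fullEuler_weighted_alpha_beta_upper_bound
(K cv γ : ℝ) (hK : 0 < K) (hcv : 0 < cv) (hγ : 1 < γ)
    (T : EReal) (hT : 0 < T)
    (u τ S : ℝ → ℝ → ℝ)
    (hu_reg : ContDiffOn ℝ 2 (fun p : ℝ × ℝ => u p.1 p.2) (strip T))
    (hτ_reg : ContDiffOn ℝ 2 (fun p : ℝ × ℝ => τ p.1 p.2) (strip T))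
    (hS_reg : ContDiffOn ℝ 2 (fun p : ℝ × ℝ => S p.1 p.2) (strip T))
    (hτ_pos : ∀ x t : ℝ, 0 ≤ t → (t : EReal) < T → 0 < τ x t)
    (hpde : ∀ x t : ℝ, 0 ≤ t → (t : EReal) < T → fullEuler K cv γ u τ S x t)
    (hbdd : ∃ C : ℝ, ∀ x : ℝ, |u x 0| ≤ C ∧ τ x 0 ≤ C ∧ 1 / τ x 0 ≤ C ∧ |S x 0| ≤ C ∧
      |deriv (fun y => S y 0) x| ≤ C ∧
      |alphaF K cv γ u τ S x 0| ≤ C ∧ |betaF K cv γ u τ S x 0| ≤ C)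
    (hBV : BoundedVariationOn (fun x => S x 0) Set.univ)
    (ε : ℝ) (hε0 : 0 < ε) (hε : ε < 1 / 4)
    (K₂hat : ℝ)
    (hk2 : ∀ x t : ℝ, 0 ≤ t → (t : EReal) < T → |k2e K cv γ ε τ S x t| < K₂hat)
    (N : ℝ)
    (hN0 : ∀ x : ℝ, aeps K cv γ ε u τ S x 0 < N ∧ beps K cv γ ε u τ S x 0 < N)
    (hN : N > max (4 * (γ + 1) * K₂hat / ε) (2 * K₂hat / (1 - 4 * ε / (γ + 1)))) :
    ∀ x t : ℝ, 0 ≤ t → (t : EReal) < T →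
      aeps K cv γ ε u τ S x t < N ∧ beps K cv γ ε u τ S x t < N := by
  intro x₀ t₀ ht₀ ht₀T
  have hsol : IsEulerSolution K cv γ T u τ S := ⟨hu_reg, hτ_reg, hS_reg, hτ_pos, hpde⟩
  obtain ⟨C, hC⟩ := hbdd
  obtain ⟨L, hL, hspeed⟩ := hsol.exists_speed_bound hK hcv hγ hT (fun x => (hC x).1)
    (fun x => (hC x).2.2.1) (fun x => (hC x).2.2.2.1) hBV ht₀T
  obtain ⟨hN₁, hN₂⟩ := max_lt_iff.1 hN
  set sg : Bool → ℝ := fun s => if s then 1 else -1 with hsg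
  have hsg1 : ∀ s, sg s = 1 ∨ sg s = -1 := by
    intro s
    cases s <;> simp [hsg]
  set F : Bool → ℝ × ℝ → ℝ := fun s p => etaP K γ τ p.1 p.2 ^ (2 * ε / (γ - 1))
    * (pdx u p.1 p.2 + sg s * gradQ K cv γ τ S p.1 p.2) - N with hF
  have hFab : ∀ x t : ℝ, 0 ≤ t → (t : EReal) < T →
      F true (x, t) = aeps K cv γ ε u τ S x t - N ∧
      F false (x, t) = beps K cv γ ε u τ S x t - N := by
    intro x t ht htT
    obtain ⟨hα, hβ⟩ := alphaF_eq (K := K) (cv := cv) (u := u) hγ (hτ_pos x t ht htT)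
      (hsol.differentiableAt_slice_τ ht htT) (hsol.differentiableAt_slice_S ht htT)
    constructor
    · simp [hF, hsg, aeps, hα]
    · simp [hF, hsg, beps, hβ, sub_eq_add_neg]
  set Q := backwardTriangle (x₀ - L * t₀ - 1) (x₀ + L * t₀ + 1) L x₀ t₀ with hQ
  have hQT : ∀ p ∈ Q, p ∈ strip T := fun p hp =>
    ⟨hp.2.2.1, lt_of_le_of_lt (EReal.coe_le_coe_iff.2 hp.2.2.2.1) ht₀T⟩
  have hLt : 0 ≤ L * t₀ := mul_nonneg hL ht₀
  suffices hneg : ∀ p ∈ Q, ∀ s, F s p < 0 by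
    have hmem : (x₀, t₀) ∈ Q := by
      refine ⟨?_, ?_, ht₀, le_rfl, by simp⟩ <;> simp only <;> linarith
    obtain ⟨e₁, e₂⟩ := hFab x₀ t₀ ht₀ ht₀T
    have h₁ := hneg _ hmem true
    have h₂ := hneg _ hmem false
    rw [e₁] at h₁
    rw [e₂] at h₂
    exact ⟨by linarith, by linarith⟩
  refine neg_of_backward_increasing (isCompact_backwardTriangle _ _ _ _ _) (fun s => ?_)
    fun p hp => ?_
  · refine ContinuousOn.mono (s := strip T) ?_ hQT
    refine ContinuousOn.sub (ContinuousOn.mul ?_ ?_) continuousOn_const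
    · exact hsol.continuousOn_etaP.rpow_const fun p hp =>
        Or.inl (etaP_pos hK hγ (hτ_pos p.1 p.2 hp.1 hp.2)).ne'
    · exact (continuousOn_pdx_strip hT hu_reg).add
        (continuousOn_const.mul (hsol.continuousOn_gradQ hT))
  obtain ⟨x, t⟩ := p
  have hpT := hQT _ hp
  obtain ⟨ht, htT⟩ : 0 ≤ t ∧ (t : EReal) < T := hpT
  rcases ht.eq_or_lt with rfl | hpos
  · left
    obtain ⟨e₁, e₂⟩ := hFab x 0 ht htT
    intro s
    cases s
    · rw [e₂]
      linarith [(hN0 x).2]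
    · rw [e₁]
      linarith [(hN0 x).1]
  right
  have hcone : |x - x₀| ≤ L * (t₀ - t) := hp.2.2.2.2
  obtain ⟨hc₁, hc₂⟩ := abs_le.1 hcone
  have hLt' := mul_nonneg hL ht
  have hxa : x₀ - L * t₀ - 1 < x := by linarith
  have hxb : x < x₀ + L * t₀ + 1 := by linarith
  refine ⟨⟨0, eventually_mem_backwardTriangle hp hxa hxb hpos (by simpa using hL)⟩,
    fun hle s hs => ?_⟩
  have hτ := hτ_pos x t ht htT
  set P := etaP K γ τ x t ^ (2 * ε / (γ - 1)) with hP
  have hP0 : 0 < P := Real.rpow_pos_of_pos (etaP_pos hK hγ hτ) _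
  obtain ⟨d, hd, hPd⟩ := hsol.exists_hasDerivAt_weighted hK hcv hγ ε hpos htT (hsg1 s) rfl hP rfl
    rfl rfl rfl
  rw [← k2e_eq (cv := cv) hK hγ hτ (hsol.differentiableAt_slice_S ht htT)] at hPd
  have ha : P * (pdx u x t + sg s * gradQ K cv γ τ S x t) = N := sub_eq_zero.1 hs
  have hb : P * (pdx u x t - sg s * gradQ K cv γ τ S x t) ≤ N := by
    have h := sub_nonpos.1 (hle (!s))
    have hneg : sg (!s) = -sg s := by cases s <;> simp [hsg]
    simpa only [hneg, neg_mul, ← sub_eq_add_neg] using h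
  have hsabs : |sg s| = 1 := by rcases hsg1 s with h | h <;> rw [h] <;> norm_num
  have hk : |sg s * k2e K cv γ ε τ S x t| < K₂hat := by
    rw [abs_mul, hsabs, one_mul]
    exact hk2 x t ht htT
  rw [ha] at hPd
  have hbr := riccati_bracket_neg hγ hε0 hε hk hN₁ hN₂ hb
  have hPd0 : 0 < P * d := by
    rw [hPd, neg_pos]
    exact mul_neg_of_pos_of_neg (div_pos (by linarith) (by linarith)) hbr
  refine ⟨_, d, (mul_pos_iff_of_pos_left hP0).1 hPd0,
    eventually_mem_backwardTriangle hp hxa hxb hpos ?_, hd.sub_const N⟩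
  rw [abs_neg, abs_mul, hsabs, one_mul,
    abs_of_pos (mul_pos (mF_pos _ _ _ _) (cP_pos hK hγ hτ))]
  exact hspeed x t ht hp.2.2.2.1
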